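/- Theorem 4.1(m): If a locally finite partially ordered set satisfies Axiom D3⁻CF and Axiom D3MD, then it satisfies Axiom NCC and Axiom D3MF. -/

import Mathlib

namespace DCompleteStmt

variable {α : Type*}

/-- A vee (d₃⁻-set) `{w; x, y}`: three distinct elements with `w ⋖ x` and `w ⋖ y`. -/
def IsVee [PartialOrder α] (w x y : α) : Prop :=
  x ≠ y ∧ w ⋖ x ∧ w ⋖ y

/-- A diamond `{w; x, y; z}`: four distinct elements with
`w ⋖ x`, `w ⋖ y`, `x ⋖ z`, `y ⋖ z`. -/
def IsDiamond [PartialOrder α] (w x y z : α) : Prop :=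
  x ≠ y ∧ w ⋖ x ∧ w ⋖ y ∧ x ⋖ z ∧ y ⋖ z

/-- A d₃-interval: an interval `[w,z]` that as a set equals a diamond `{w; x, y; z}`. -/
def IsD3Interval [PartialOrder α] (w x y z : α) : Prop :=
  IsDiamond w x y z ∧ Set.Icc w z = {w, x, y, z}

/-- Axiom VT: every vee has a top. -/
def AxVT (α : Type*) [PartialOrder α] : Prop :=
  ∀ w x y : α, IsVee w x y → ∃ z : α, x ⋖ z ∧ y ⋖ z

/-- Axiom NCC: there are no overlapping vees. -/
def AxNCC (α : Type*) [PartialOrder α] : Prop :=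
  ¬ ∃ w w' x y : α, w ≠ w' ∧ x ≠ y ∧ w ⋖ x ∧ w ⋖ y ∧ w' ⋖ x ∧ w' ⋖ y

/-- Property UT: every vee has exactly one top. -/
def PropUT (α : Type*) [PartialOrder α] : Prop :=
  ∀ w x y : α, IsVee w x y → ∃! z : α, x ⋖ z ∧ y ⋖ z

/-- Axiom D3⁻C: every vee has a completing element. -/
def AxD3C (α : Type*) [PartialOrder α] : Prop :=
  ∀ w x y : α, IsVee w x y → ∃ z : α, IsD3Interval w x y z

/-- Property NTC: no element is covered by three pairwise distinct elements. -/
def PropNTC (α : Type*) [PartialOrder α] : Prop :=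
  ¬ ∃ w x y u : α, x ≠ y ∧ x ≠ u ∧ y ≠ u ∧ w ⋖ x ∧ w ⋖ y ∧ w ⋖ u

/-- Property SS: every short interval has cardinality 3 or 4. -/
def PropSS (α : Type*) [PartialOrder α] : Prop :=
  ∀ w u z : α, w ⋖ u → u ⋖ z →
    (Set.Icc w z).ncard = 3 ∨ (Set.Icc w z).ncard = 4

/-- Axiom FT: the top of every diamond covers only the elbows of the diamond. -/
def AxFT (α : Type*) [PartialOrder α] : Prop :=
  ∀ w x y z : α, IsDiamond w x y z → ∀ u : α, u ⋖ z → u = x ∨ u = y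

/-- Axiom D3MF: the maximum of every d₃-interval covers only the elbows. -/
def AxD3MF (α : Type*) [PartialOrder α] : Prop :=
  ∀ w x y z : α, IsD3Interval w x y z → ∀ u : α, u ⋖ z → u = x ∨ u = y

/-- Axiom D3MD: two d₃-intervals with the same maximum element coincide as sets. -/
def AxD3MD (α : Type*) [PartialOrder α] : Prop :=
  ∀ w x y z w' x' y' : α, IsD3Interval w x y z → IsD3Interval w' x' y' z →
    ({w, x, y, z} : Set α) = {w', x', y', z}

/-- Axiom D3⁻CF: every vee has a completing element covering only the elbows. -/
def AxD3CF (α : Type*) [PartialOrder α] : Prop :=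
  ∀ w x y : α, IsVee w x y →
    ∃ z : α, IsD3Interval w x y z ∧ ∀ u : α, u ⋖ z → u = x ∨ u = y

/-- Property DAI: every diamond is an interval. -/
def PropDAI (α : Type*) [PartialOrder α] : Prop :=
  ∀ w x y z : α, IsDiamond w x y z → Set.Icc w z = {w, x, y, z}

/-- Property UC3: every vee has exactly one completing element. -/
def PropUC3 (α : Type*) [PartialOrder α] : Prop :=
  ∀ w x y : α, IsVee w x y → ∃! z : α, IsD3Interval w x y z

/-- Property UPUE: upward propagation of up edges. -/
def PropUPUE (α : Type*) [PartialOrder α] : Prop :=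
  ∀ w x y : α, w ≤ y → w ⋖ x → ¬ x ≤ y → ∃ z : α, y ⋖ z ∧ x ≤ z

/-- A covering chain `a = f 0 ⋖ f 1 ⋖ ⋯ ⋖ f n = b` of length `n`. -/
def IsCovChain [PartialOrder α] (f : ℕ → α) (n : ℕ) (a b : α) : Prop :=
  f 0 = a ∧ f n = b ∧ ∀ i < n, f i ⋖ f (i + 1)

/-- Connectedness via the Hasse diagram (covering graph). -/
def HasseConnected (α : Type*) [PartialOrder α] : Prop :=
  ∀ a b : α, Relation.ReflTransGen (fun u v : α => u ⋖ v ∨ v ⋖ u) a b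

/-- Property UM: a unique maximal element. -/
def PropUM (α : Type*) [PartialOrder α] : Prop :=
  ∃! z : α, IsMax z

/-- Property CLMEE: a unique maximal element, and all covering chains from any
element to it have equal length. -/
def PropCLMEE (α : Type*) [PartialOrder α] : Prop :=
  ∃ z : α, IsMax z ∧ (∀ z' : α, IsMax z' → z' = z) ∧
    ∀ (w : α) (n m : ℕ) (f g : ℕ → α),
      IsCovChain f n w z → IsCovChain g m w z → n = m

/-- The poset is ranked. -/
def IsRanked (α : Type*) [PartialOrder α] : Prop :=
  ∃ ρ : α → ℤ, ∀ x y : α, x ⋖ y → ρ y = ρ x + 1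

/-- Property CLE: whenever `x < y`, all covering chains from `x` to `y`
have equal length. -/
def PropCLE (α : Type*) [PartialOrder α] : Prop :=
  ∀ x y : α, x < y → ∀ (n m : ℕ) (f g : ℕ → α),
    IsCovChain f n x y → IsCovChain g m x y → n = m

/-!
In a locally finite poset, every element strictly below `z` lies below some element covered by `z`.
Hence if `z` covers only `x` and `y`, every diamond `{w'; x, y; z}` is an interval. Applied to the
completing element `z` that Axiom D3⁻CF supplies for one of two overlapping vees `{w; x, y}` and
`{w'; x, y}`, this makes both `[w, z]` and `[w', z]` into d₃-intervals, so Axiom D3MD forces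
`w = w'`. Once NCC holds, two distinct elements have at most one common upper cover, so the maximum
of a d₃-interval is the completing element of Axiom D3⁻CF and covers only its elbows.
-/

theorem Ico_eq_biUnion_Icc_covBy [Preorder α] [IsStronglyCoatomic α] (a b : α) :
    Set.Ico a b = ⋃ u ∈ {u | u ⋖ b}, Set.Icc a u := by
  ext c
  simp only [Set.mem_Ico, Set.mem_iUnion, Set.mem_ofPred_eq, Set.mem_Icc, exists_prop]
  constructor
  · rintro ⟨hac, hcb⟩
    obtain ⟨u, hcu, hub⟩ := exists_le_covBy_of_lt hcb
    exact ⟨u, hub, hac, hcu⟩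
  · rintro ⟨u, hub, hac, hcu⟩
    exact ⟨hac, hcu.trans_lt hub.lt⟩

section Diamond

variable [PartialOrder α] {w x y z w' x' y' z' : α}

theorem IsDiamond.isVee (h : IsDiamond w x y z) : IsVee w x y :=
  ⟨h.1, h.2.1, h.2.2.1⟩

theorem IsDiamond.isD3Interval [IsStronglyCoatomic α] (h : IsDiamond w x y z)
    (hz : ∀ u, u ⋖ z → u = x ∨ u = y) : IsD3Interval w x y z := by
  refine ⟨h, ?_⟩
  obtain ⟨-, hwx, hwy, hxz, hyz⟩ := h
  have hcoatoms : {u | u ⋖ z} = {x, y} :=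
    Set.Subset.antisymm hz (Set.pair_subset hxz hyz)
  calc
    Set.Icc w z = insert z (Set.Ico w z) := (Set.Ico_insert_right (hwx.le.trans hxz.le)).symm
    _ = insert z (Set.Icc w x ∪ Set.Icc w y) := by
      rw [Ico_eq_biUnion_Icc_covBy, hcoatoms, Set.biUnion_pair]
    _ = insert z ({w, x} ∪ {w, y}) := by rw [hwx.Icc_eq, hwy.Icc_eq]
    _ = {w, x, y, z} := by grind

theorem AxD3MD.bot_eq (hD3MD : AxD3MD α) (h : IsD3Interval w x y z)
    (h' : IsD3Interval w' x' y' z) : w = w' := by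
  have hle : w ≤ z := h.1.2.1.le.trans h.1.2.2.2.1.le
  have hIcc : Set.Icc w z = Set.Icc w' z :=
    h.2.trans <| (hD3MD w x y z w' x' y' h h').trans h'.2.symm
  exact ((Set.Icc_eq_Icc_iff hle).mp hIcc).1

theorem AxNCC.top_unique (hNCC : AxNCC α) (hxy : x ≠ y) (hxz : x ⋖ z) (hyz : y ⋖ z)
    (hxz' : x ⋖ z') (hyz' : y ⋖ z') : z = z' := by
  by_contra hzz'
  exact hNCC ⟨x, y, z, z', hxy, hzz', hxz, hxz', hyz, hyz'⟩

theorem AxD3CF.axNCC [IsStronglyCoatomic α] (hD3CF : AxD3CF α) (hD3MD : AxD3MD α) :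
    AxNCC α := by
  rintro ⟨w, w', x, y, hww', hxy, hwx, hwy, hw'x, hw'y⟩
  obtain ⟨z, hwz, hz⟩ := hD3CF w x y ⟨hxy, hwx, hwy⟩
  obtain ⟨-, -, -, hxz, hyz⟩ := hwz.1
  have hw'z : IsD3Interval w' x y z := IsDiamond.isD3Interval ⟨hxy, hw'x, hw'y, hxz, hyz⟩ hz
  exact hww' (hD3MD.bot_eq hwz hw'z)

theorem AxD3CF.axD3MF (hD3CF : AxD3CF α) (hNCC : AxNCC α) : AxD3MF α := by
  rintro w x y z ⟨hdiamond, -⟩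
  obtain ⟨z', ⟨⟨-, -, -, hxz', hyz'⟩, -⟩, hz'⟩ := hD3CF w x y hdiamond.isVee
  obtain ⟨hxy, -, -, hxz, hyz⟩ := hdiamond
  obtain rfl : z = z' := hNCC.top_unique hxy hxz hyz hxz' hyz'
  exact hz'

end Diamond

theorem stmt_10_general {α : Type*} [PartialOrder α] [IsStronglyCoatomic α]
    (hD3CF : AxD3CF α) (hD3MD : AxD3MD α) : AxNCC α ∧ AxD3MF α :=
  have hNCC : AxNCC α := hD3CF.axNCC hD3MD
  ⟨hNCC, hD3CF.axD3MF hNCC⟩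

/-- Theorem 4.1(m): D3⁻CF and D3MD imply NCC and D3MF. -/
theorem stmt_10 {α : Type*} [PartialOrder α] (hLF : ∀ a b : α, (Set.Icc a b).Finite)
    (hD3CF : AxD3CF α) (hD3MD : AxD3MD α) : AxNCC α ∧ AxD3MF α := by
  let := LocallyFiniteOrder.ofFiniteIcc hLF
  exact stmt_10_general hD3CF hD3MD

end DCompleteStmt
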